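/- Let R be a ring and let d ≥ 1 be an integer. Suppose given R-modules G_0, …, G_d; P_{−1}, P_0, …, P_d; and Q_{−1}, Q_0, …, Q_{d−1}; together with, for each 0 ≤ j ≤ d, an exact sequence of R-modules 0 → Q_{j−1} →(a_j) P_j →(b_j) G_j →(c_j) P_{j−1} → 0. Define ∂_j := b_{j−1} ∘ c_j : G_j → G_{j−1} for 1 ≤ j ≤ d. Then: (i) ∂_{j−1} ∘ ∂_j = 0 for all 2 ≤ j ≤ d, so 0 → G_d → G_{d−1} → ⋯ → G_1 → G_0 → 0 is a complex; (ii) for each 1 ≤ j ≤ d−1 there is an R-module isomorphism ker(∂_j)/im(∂_{j+1}) ≅ Q_{j−2}; (iii) there is an isomorphism G_0/im(∂_1) ≅ P_{−1}; and (iv) if moreover P_d = 0, then ker(∂_d) ≅ Q_{d−2}. -/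

import Mathlib

/-!
Since `c` is surjective and `ker b = im a`, the map `c` sends `ker (b ∘ c)` onto `im a ≅ Q`, with
kernel `ker c`; this is `exists_ker_comp_surjective`. By exactness at `G` and surjectivity of the
next `c`, `ker c` is the image of the next differential (`range_comp_eq_ker`), so the homology is
`Q`. At the top degree the image of `b` vanishes, so `ker c = 0` and the whole kernel is `Q`. At the
bottom degree the first isomorphism theorem for `c 0` identifies the cokernel.
-/

/-- If `c` is surjective and `0 → Q → P → N` is exact, then `c` induces a surjection from
`ker (b ∘ c)` onto `Q` whose kernel is `ker c`. -/
theorem exists_ker_comp_surjective {R M P N Q : Type*} [Ring R]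
    [AddCommGroup M] [Module R M] [AddCommGroup P] [Module R P]
    [AddCommGroup N] [Module R N] [AddCommGroup Q] [Module R Q]
    (a : Q →ₗ[R] P) (b : P →ₗ[R] N) (c : M →ₗ[R] P)
    (ha : Function.Injective a) (hab : LinearMap.range a = LinearMap.ker b)
    (hc : Function.Surjective c) :
    ∃ f : LinearMap.ker (b.comp c) →ₗ[R] Q, Function.Surjective f ∧
      LinearMap.ker f =
        Submodule.comap (LinearMap.ker (b.comp c)).subtype (LinearMap.ker c) := by
  let g : LinearMap.ker (b.comp c) →ₗ[R] LinearMap.range a :=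
    (c.comp (LinearMap.ker (b.comp c)).subtype).codRestrict (LinearMap.range a)
      (fun x => by rw [hab]; exact x.2)
  refine ⟨(LinearEquiv.ofInjective a ha).symm.toLinearMap.comp g, ?_, ?_⟩
  · refine (LinearEquiv.ofInjective a ha).symm.surjective.comp ?_
    rintro ⟨y, hy⟩
    obtain ⟨x, rfl⟩ := hc y
    exact ⟨⟨x, by rw [hab] at hy; exact hy⟩, rfl⟩
  · rw [LinearEquiv.ker_comp, LinearMap.ker_codRestrict]
    rfl

theorem range_comp_eq_ker {R M P N L : Type*} [Ring R]
    [AddCommGroup M] [Module R M] [AddCommGroup P] [Module R P]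
    [AddCommGroup N] [Module R N] [AddCommGroup L] [Module R L]
    (c' : M →ₗ[R] P) (b : P →ₗ[R] N) (c : N →ₗ[R] L)
    (hc' : Function.Surjective c') (hbc : LinearMap.range b = LinearMap.ker c) :
    LinearMap.range (b.comp c') = LinearMap.ker c := by
  rw [LinearMap.range_comp_of_range_eq_top b (LinearMap.range_eq_top.2 hc'), hbc]

/-- The abstract homological content of Theorem 5.18.  Here, relative to the paper's
notation, `G j` is the paper's `G_j`, `P j` is the paper's `P_{j-1}` (so `P 0 = P_{-1}`
and `P (d+1) = P_d`), and `Q j` is the paper's `Q_{j-1}` (so `Q j = Q_{j'-2}` when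
`j' = j + 1`).  For each `0 ≤ j ≤ d` we are given an exact sequence
`0 → Q_{j-1} →(a_j) P_j →(b_j) G_j →(c_j) P_{j-1} → 0`, i.e.
`0 → Q j →(a j) P (j+1) →(b j) G j →(c j) P j → 0`.  Setting
`∂_j := b_{j-1} ∘ c_j : G_j → G_{j-1}` (so `∂_{j+1} = (b j).comp (c (j+1))`):
(i) `∂_{j-1} ∘ ∂_j = 0` for `2 ≤ j ≤ d`;
(ii) `ker ∂_j / im ∂_{j+1} ≅ Q_{j-2}` for `1 ≤ j ≤ d - 1`;
(iii) `G_0 / im ∂_1 ≅ P_{-1}`;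
(iv) if `P_d = 0` then `ker ∂_d ≅ Q_{d-2}`. -/
theorem zawatsky_complex_cohomology
    {R : Type*} [Ring R] (d : ℕ) (hd : 1 ≤ d)
    (G P Q : ℕ → Type*)
    [∀ j, AddCommGroup (G j)] [∀ j, Module R (G j)]
    [∀ j, AddCommGroup (P j)] [∀ j, Module R (P j)]
    [∀ j, AddCommGroup (Q j)] [∀ j, Module R (Q j)]
    (a : ∀ j, Q j →ₗ[R] P (j + 1))
    (b : ∀ j, P (j + 1) →ₗ[R] G j)
    (c : ∀ j, G j →ₗ[R] P j)
    (ha : ∀ j, j ≤ d → Function.Injective (a j))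
    (hab : ∀ j, j ≤ d → LinearMap.range (a j) = LinearMap.ker (b j))
    (hbc : ∀ j, j ≤ d → LinearMap.range (b j) = LinearMap.ker (c j))
    (hc : ∀ j, j ≤ d → Function.Surjective (c j)) :
    (∀ j, j + 2 ≤ d →
      ((b j).comp (c (j + 1))).comp ((b (j + 1)).comp (c (j + 2))) = 0) ∧
    (∀ j, j + 2 ≤ d →
      Nonempty
        ((LinearMap.ker ((b j).comp (c (j + 1))) ⧸
            Submodule.comap (LinearMap.ker ((b j).comp (c (j + 1)))).subtype
              (LinearMap.range ((b (j + 1)).comp (c (j + 2)))))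
          ≃ₗ[R] Q j)) ∧
    Nonempty ((G 0 ⧸ LinearMap.range ((b 0).comp (c 1))) ≃ₗ[R] P 0) ∧
    (∀ e, d = e + 1 → Subsingleton (P (d + 1)) →
      Nonempty ((LinearMap.ker ((b e).comp (c (e + 1)))) ≃ₗ[R] Q e)) := by
  refine ⟨fun j hj => ?_, fun j hj => ?_, ?_, ?_⟩
  · ext x
    have h : b (j + 1) (c (j + 2) x) ∈ LinearMap.ker (c (j + 1)) := by
      rw [← hbc (j + 1) (by omega)]
      exact ⟨_, rfl⟩
    simp [LinearMap.mem_ker.1 h]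
  · obtain ⟨f, hf, hk⟩ := exists_ker_comp_surjective (a j) (b j) (c (j + 1))
      (ha j (by omega)) (hab j (by omega)) (hc (j + 1) (by omega))
    rw [range_comp_eq_ker (c (j + 2)) (b (j + 1)) (c (j + 1)) (hc _ hj)
      (hbc _ (by omega)), ← hk]
    exact ⟨f.quotKerEquivOfSurjective hf⟩
  · rw [range_comp_eq_ker (c 1) (b 0) (c 0) (hc 1 hd) (hbc 0 (by omega))]
    exact ⟨(c 0).quotKerEquivOfSurjective (hc 0 (by omega))⟩
  · rintro e rfl hP
    obtain ⟨f, hf, hk⟩ := exists_ker_comp_surjective (a e) (b e) (c (e + 1))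
      (ha e (by omega)) (hab e (by omega)) (hc (e + 1) le_rfl)
    have hb : LinearMap.ker (c (e + 1)) = ⊥ := by
      rw [← hbc (e + 1) le_rfl, Subsingleton.elim (b (e + 1)) 0, LinearMap.range_zero]
    rw [hb, Submodule.comap_bot, Submodule.ker_subtype] at hk
    exact ⟨LinearEquiv.ofBijective f ⟨LinearMap.ker_eq_bot.1 hk, hf⟩⟩
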